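/- arXiv:2103.04504 — 4 statements merged into one kernel-verified Lean document; each statement's English description precedes it below -/
import Mathlib

section
/- For every fixed u ∈ ℝ, V_q(u) → max(0, 1 - u) as q → ∞; that is, the generalized DWD loss converges pointwise to the hinge loss H(u) = max(0, 1 - u). -/
/-! For `u < 1` the threshold `q / (1 + q)` tends to `1`, so the linear branch eventually applies and
`V_q(u) = 1 - u`. For `1 ≤ u` the power branch applies for every `q > 0`, and there
`0 ≤ V_q(u) ≤ 1 / (q + 1)` because `u ^ (-q) ≤ 1` and `q ^ q ≤ (q + 1) ^ q`. -/

/-- The generalized distance-weighted discrimination (DWD) loss. -/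
noncomputable def Vq (q u : ℝ) : ℝ :=
  if u ≤ q / (1 + q) then 1 - u else u ^ (-q) * (q ^ q / (q + 1) ^ (q + 1))

lemma Vq_mem_of_one_le {q u : ℝ} (hq : 0 < q) (hu : 1 ≤ u) :
    0 ≤ Vq q u ∧ Vq q u ≤ 1 / (q + 1) := by
  have hlt : q / (1 + q) < u := by
    have : q / (1 + q) < 1 := by rw [div_lt_one (by linarith)]; linarith
    linarith
  rw [Vq, if_neg (not_le.mpr hlt)]
  have h1 : u ^ (-q) ≤ 1 := Real.rpow_le_one_of_one_le_of_nonpos hu (by linarith)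
  have h2 : q ^ q ≤ (q + 1) ^ q := Real.rpow_le_rpow hq.le (by linarith) hq.le
  have h3 : 0 < (q + 1) ^ q := Real.rpow_pos_of_pos (by linarith) q
  have h4 : q ^ q / (q + 1) ^ (q + 1) ≤ 1 / (q + 1) := by
    rw [Real.rpow_add_one (by linarith), ← div_div]
    gcongr
    rwa [div_le_one h3]
  have h5 : 0 ≤ q ^ q / (q + 1) ^ (q + 1) := by positivity
  exact ⟨by positivity, (mul_le_of_le_one_left h5 h1).trans h4⟩

/-- For every fixed `u`, the generalized DWD loss `V_q(u)` converges to the hinge loss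
`max 0 (1 - u)` as `q → ∞`. -/
theorem Vq_tendsto_hinge (u : ℝ) :
    Filter.Tendsto (fun q : ℝ => Vq q u) Filter.atTop (nhds (max 0 (1 - u))) := by
  rcases lt_or_ge u 1 with hu | hu
  · rw [max_eq_right (by linarith)]
    refine tendsto_const_nhds.congr' ?_
    filter_upwards [Filter.eventually_gt_atTop 0,
      Filter.eventually_ge_atTop (u / (1 - u))] with q hq hqu
    -- `u ≤ q / (1 + q)` is equivalent to `u / (1 - u) ≤ q`.
    rw [div_le_iff₀ (by linarith)] at hqu
    rw [Vq, if_pos]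
    rw [le_div_iff₀ (by linarith)]
    linarith
  · rw [max_eq_left (by linarith)]
    have hlim : Filter.Tendsto (fun q : ℝ => 1 / (q + 1)) Filter.atTop (nhds 0) :=
      (Filter.tendsto_atTop_add_const_right _ 1 Filter.tendsto_id).const_div_atTop 1
    refine tendsto_of_tendsto_of_tendsto_of_le_of_le' tendsto_const_nhds hlim ?_ ?_
    · filter_upwards [Filter.eventually_gt_atTop 0] with q hq
      exact (Vq_mem_of_one_le hq hu).1
    · filter_upwards [Filter.eventually_gt_atTop 0] with q hq
      exact (Vq_mem_of_one_le hq hu).2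
end

section
/- For every q > 0, the function V_q is 1-Lipschitz on ℝ: for all u, v ∈ ℝ, |V_q(u) − V_q(v)| ≤ |u − v|. -/
lemma Vq_const_eq {q : ℝ} (hq : 0 < q) :
    q ^ q / (q + 1) ^ (q + 1) = (q / (1 + q)) ^ (q + 1) / q := by
  rw [add_comm 1 q, Real.div_rpow hq.le (by positivity), Real.rpow_add hq, Real.rpow_one]
  field_simp

/-- The power branch is also valid at the breakpoint itself. -/
lemma Vq_eq_of_le {q u : ℝ} (hq : 0 < q) (hu : q / (1 + q) ≤ u) :
    Vq q u = u ^ (-q) * ((q / (1 + q)) ^ (q + 1) / q) := by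
  rw [← Vq_const_eq hq]
  rcases hu.eq_or_lt with rfl | hlt
  · have hc : 0 < q / (1 + q) := by positivity
    rw [Vq, if_pos le_rfl, Vq_const_eq hq, ← mul_div_assoc, ← Real.rpow_add hc,
      neg_add_cancel_left, Real.rpow_one]
    field_simp
    ring
  · rw [Vq, if_neg hlt.not_ge]

lemma Vq_antitone {q : ℝ} (hq : 0 < q) : Antitone (Vq q) := by
  have hc : 0 < q / (1 + q) := by positivity
  refine AntitoneOn.Iic_union_Ici (a := q / (1 + q)) ?_ ?_
  · intro u hu v hv huv
    simp only [Vq, if_pos (show u ≤ _ from hu), if_pos (show v ≤ _ from hv)]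
    linarith
  · intro u hu v hv huv
    rw [Vq_eq_of_le hq hu, Vq_eq_of_le hq hv]
    exact mul_le_mul_of_nonneg_right
      (Real.rpow_le_rpow_of_nonpos (hc.trans_le hu) huv (by linarith)) (by positivity)

lemma Vq_add_id_monotone {q : ℝ} (hq : 0 < q) : Monotone fun u => Vq q u + u := by
  have hc : 0 < q / (1 + q) := by positivity
  refine MonotoneOn.Iic_union_Ici (a := q / (1 + q)) ?_ ?_
  · intro u hu v hv huv
    simp only [Vq, if_pos (show u ≤ _ from hu), if_pos (show v ≤ _ from hv)]
    linarith
  · suffices h : MonotoneOn (fun u : ℝ => u ^ (-q) * ((q / (1 + q)) ^ (q + 1) / q) + u)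
        (Set.Ici (q / (1 + q))) from
      h.congr fun u hu => by simp only [Vq_eq_of_le hq hu]
    have hd : ∀ u ∈ Set.Ici (q / (1 + q)),
        HasDerivAt (fun u : ℝ => u ^ (-q) * ((q / (1 + q)) ^ (q + 1) / q) + u)
          (-q * u ^ (-q - 1) * ((q / (1 + q)) ^ (q + 1) / q) + 1) u := fun u hu =>
      ((Real.hasDerivAt_rpow_const (Or.inl (hc.trans_le hu).ne')).mul_const _).add
        (hasDerivAt_id u)
    refine monotoneOn_of_hasDerivWithinAt_nonneg (convex_Ici _)
      (fun u hu => (hd u hu).continuousAt.continuousWithinAt)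
      (fun u hu => (hd u (interior_subset hu)).hasDerivWithinAt) fun u hu => ?_
    have hcu : q / (1 + q) ≤ u := interior_subset hu
    have hu0 : 0 < u := hc.trans_le hcu
    have hle : (q / (1 + q)) ^ (q + 1) ≤ u ^ (q + 1) :=
      Real.rpow_le_rpow hc.le hcu (by linarith)
    have h1 : u ^ (-q - 1) * (q / (1 + q)) ^ (q + 1) ≤ 1 := by
      rw [show -q - 1 = -(q + 1) by ring, Real.rpow_neg hu0.le]
      exact inv_mul_le_one_of_le₀ hle (by positivity)
    have h2 : -q * u ^ (-q - 1) * ((q / (1 + q)) ^ (q + 1) / q)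
        = -(u ^ (-q - 1) * (q / (1 + q)) ^ (q + 1)) := by
      rw [mul_div_assoc', div_eq_iff hq.ne']
      ring
    rw [h2]
    linarith

/-- For every `q > 0`, the generalized DWD loss `V_q` is 1-Lipschitz on `ℝ`. -/
theorem Vq_lipschitz (q : ℝ) (hq : 0 < q) :
    ∀ u v : ℝ, |Vq q u - Vq q v| ≤ |u - v| := by
  intro u v
  wlog huv : u ≤ v generalizing u v
  · rw [abs_sub_comm, abs_sub_comm u]
    exact this v u (le_of_not_ge huv)
  have h1 := Vq_antitone hq huv
  have h2 : Vq q u + u ≤ Vq q v + v := Vq_add_id_monotone hq huv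
  rw [abs_of_nonneg (by linarith), abs_of_nonpos (by linarith)]
  linarith
end

section
/- For every q > 0 and every u ∈ ℝ, 0 ≤ V_q(u) − max(0, 1 − u) ≤ c_q, where c_q = q^q/(q+1)^{q+1}. In particular, since c_q → 0 as q → ∞, V_q converges uniformly on ℝ to the hinge loss max(0, 1 − u) as q → ∞. -/
/-- Bernoulli's inequality for a negative exponent: the tangent to `x ^ (-q)` at `1`. -/
lemma one_sub_mul_le_rpow_neg {q x : ℝ} (hq : 0 < q) (hx : 0 < x) :
    1 - q * (x - 1) ≤ x ^ (-q) := by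
  rw [Real.rpow_def_of_pos hx]
  have h1 := Real.add_one_le_exp (Real.log x * -q)
  have h2 := mul_le_mul_of_nonneg_left (Real.log_le_sub_one_of_pos hx) hq.le
  linarith

lemma cq_eq {q : ℝ} (hq : 0 < q) :
    q ^ q / (q + 1) ^ (q + 1) = (q / (1 + q)) ^ q / (q + 1) := by
  rw [Real.rpow_add_one (by positivity), Real.div_rpow hq.le (by positivity), add_comm 1 q, div_div]

lemma cq_le {q : ℝ} (hq : 0 < q) : q ^ q / (q + 1) ^ (q + 1) ≤ 1 / (q + 1) := by
  rw [cq_eq hq]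
  gcongr
  exact Real.rpow_le_one (by positivity) ((div_le_one (by positivity)).2 (by linarith)) hq.le

lemma Vq_sub_hinge_bounds {q : ℝ} (hq : 0 < q) (u : ℝ) :
    0 ≤ Vq q u - max 0 (1 - u) ∧
      Vq q u - max 0 (1 - u) ≤ q ^ q / (q + 1) ^ (q + 1) := by
  have hc0 : 0 < q ^ q / (q + 1) ^ (q + 1) := by positivity
  have ht0 : 0 < q / (1 + q) := by positivity
  have hceq := cq_eq hq
  have htq : q / (1 + q) * (q + 1) = q := by field_simp; ring
  unfold Vq
  generalize q ^ q / (q + 1) ^ (q + 1) = c at *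
  generalize q / (1 + q) = t at *
  have ht1 : t < 1 := by nlinarith
  split_ifs with h
  · rw [max_eq_right (by linarith)]
    constructor <;> linarith
  · push Not at h
    have hu : 0 < u := ht0.trans h
    have hup : 0 < u ^ (-q) := Real.rpow_pos_of_pos hu _
    refine ⟨sub_nonneg.2 (max_le (by positivity) ?_), ?_⟩
    · -- The tangent to `c u ^ (-q)` at `t` is the tangent at `1` in the variable `u / t`.
      have hb := one_sub_mul_le_rpow_neg hq (div_pos hu ht0)
      have e : u ^ (-q) * c = (u / t) ^ (-q) / (q + 1) := by
        rw [hceq, Real.div_rpow hu.le ht0.le, Real.rpow_neg ht0.le]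
        field_simp
      have e2 : q * (u / t) = u * (q + 1) := by
        field_simp
        linear_combination -htq
      rw [e, le_div_iff₀ (by positivity)]
      linarith
    · rcases le_total 1 u with h1 | h1
      · have : u ^ (-q) ≤ 1 := Real.rpow_le_one_of_one_le_of_nonpos h1 (by linarith)
        have := le_max_left 0 (1 - u)
        nlinarith
      · rw [max_eq_right (by linarith)]
        -- The tangent to `u ^ (-q)` at `u`, evaluated at `1`.
        have hb := one_sub_mul_le_rpow_neg hq (inv_pos.2 hu)
        rw [Real.inv_rpow hu.le] at hb
        have hb' : u ^ (-q) * (1 - q * (u⁻¹ - 1)) ≤ 1 := by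
          calc _ ≤ u ^ (-q) * (u ^ (-q))⁻¹ := by gcongr
            _ = 1 := mul_inv_cancel₀ hup.ne'
        have hm : u ^ (-q) * c ≤ 1 / (q + 1) := by
          have h3 : u ^ (-q) ≤ t ^ (-q) :=
            Real.rpow_le_rpow_of_nonpos ht0 h.le (by linarith)
          calc _ ≤ t ^ (-q) * c := by gcongr
            _ = 1 / (q + 1) := by
              rw [hceq, Real.rpow_neg ht0.le]
              field_simp
        -- The slope of `c u ^ (-q)` at `u` is at least `-1`.
        have hs : u ^ (-q) * c * q * u⁻¹ ≤ 1 := by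
          rw [← div_eq_mul_inv, div_le_one hu]
          calc _ ≤ 1 / (q + 1) * q := by gcongr
            _ = t := by field_simp; linarith
            _ ≤ u := h.le
        have e3 : u⁻¹ - 1 = u⁻¹ * (1 - u) := by field_simp
        rw [e3] at hb'
        have h5 := mul_le_mul_of_nonneg_right hb' hc0.le
        have h6 := mul_le_mul_of_nonneg_right hs (sub_nonneg.2 h1)
        linarith

/-- For every `q > 0` and every `u`, `0 ≤ V_q(u) − max 0 (1 − u) ≤ c_q`, where
`c_q = q^q/(q+1)^(q+1)`; in particular `V_q` converges uniformly on `ℝ` to the hinge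
loss as `q → ∞`. -/
theorem Vq_sub_hinge_bounds_and_tendstoUniformly :
    (∀ q : ℝ, 0 < q → ∀ u : ℝ,
      0 ≤ Vq q u - max 0 (1 - u) ∧
      Vq q u - max 0 (1 - u) ≤ q ^ q / (q + 1) ^ (q + 1)) ∧
    TendstoUniformly (fun q : ℝ => fun u : ℝ => Vq q u)
      (fun u : ℝ => max 0 (1 - u)) Filter.atTop := by
  refine ⟨fun q hq u => Vq_sub_hinge_bounds hq u, ?_⟩
  rw [Metric.tendstoUniformly_iff]
  intro ε hε
  filter_upwards [Filter.eventually_gt_atTop (1 / ε)] with q hq u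
  have hq0 : 0 < q := (by positivity : 0 < 1 / ε).trans hq
  obtain ⟨h1, h2⟩ := Vq_sub_hinge_bounds hq0 u
  rw [dist_comm, Real.dist_eq, abs_of_nonneg h1]
  refine (h2.trans (cq_le hq0)).trans_lt ?_
  rw [div_lt_iff₀ hε] at hq
  rw [div_lt_iff₀ (by positivity)]
  linarith
end

section
/- Let q > 0 with c_q = q^q/(q+1)^{q+1}, let η₀ > 0, and let η ∈ ℝ with 1/2 < η ≤ 1 and η − 1/2 − c_q/4 ≥ η₀. Then for every g ≥ 0: (i) η g + η(4 − c_q) − 2 ≥ 4 η₀ > 0, and (ii) (g + 2)² ≤ ( g/η + 4/η + 1/η₀ ) · ( η g + η(4 − c_q) − 2 ). -/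
/-!
Write `c = q ^ q / (q + 1) ^ (q + 1)` and `D = η * g + η * (4 - c) - 2`. As `0 < c` and `η ≤ 1`, the
noise condition gives `D ≥ η * g + 4 * η₀`, hence both `D ≥ η * g` and `D ≥ 4 * η₀`. Using the
former against `(g + 4) / η` and the latter against `1 / η₀` bounds the product below by
`(g + 4) * g + 4`, which is exactly `(g + 2) ^ 2`.
-/

/-- Key algebraic inequality in the proof of Lemma 2: with `c_q = q^q/(q+1)^(q+1)`,
`η₀ > 0`, `1/2 < η ≤ 1`, and `η − 1/2 − c_q/4 ≥ η₀`, for every `g ≥ 0` one has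
(i) `η g + η(4 − c_q) − 2 ≥ 4η₀ > 0` and
(ii) `(g + 2)² ≤ (g/η + 4/η + 1/η₀) · (η g + η(4 − c_q) − 2)`. -/
theorem lemma2_algebraic (q η₀ η : ℝ) (hq : 0 < q) (hη₀ : 0 < η₀)
    (hηlb : 1 / 2 < η) (hηub : η ≤ 1)
    (hnoise : η - 1 / 2 - (q ^ q / (q + 1) ^ (q + 1)) / 4 ≥ η₀) :
    ∀ g : ℝ, 0 ≤ g →
      (η * g + η * (4 - q ^ q / (q + 1) ^ (q + 1)) - 2 ≥ 4 * η₀ ∧ (0 : ℝ) < 4 * η₀) ∧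
      (g + 2) ^ 2 ≤ (g / η + 4 / η + 1 / η₀) *
        (η * g + η * (4 - q ^ q / (q + 1) ^ (q + 1)) - 2) := by
  have hc : 0 < q ^ q / (q + 1) ^ (q + 1) := by positivity
  generalize q ^ q / (q + 1) ^ (q + 1) = c at hnoise hc ⊢
  intro g hg
  have hη : 0 < η := by linarith
  -- Since `η ≤ 1`, the term `η * c` is at most `c`, which the noise condition controls.
  have hD : η * g + 4 * η₀ ≤ η * g + η * (4 - c) - 2 := by
    nlinarith [mul_le_of_le_one_left hc.le hηub]
  have hηg : 0 ≤ η * g := by positivity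
  generalize η * g + η * (4 - c) - 2 = D at hD ⊢
  refine ⟨⟨by linarith, by linarith⟩, ?_⟩
  have h1 : (g + 4) * g ≤ (g + 4) / η * D :=
    calc (g + 4) * g = (g + 4) / η * (η * g) := by field_simp
      _ ≤ (g + 4) / η * D := by gcongr; linarith
  have h2 : 4 ≤ 1 / η₀ * D :=
    calc (4 : ℝ) = 1 / η₀ * (4 * η₀) := by field_simp
      _ ≤ 1 / η₀ * D := by gcongr; linarith
  calc (g + 2) ^ 2 = (g + 4) * g + 4 := by ring
    _ ≤ (g + 4) / η * D + 1 / η₀ * D := add_le_add h1 h2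
    _ = (g / η + 4 / η + 1 / η₀) * D := by ring
end
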